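/- Let (u_j)_{j=1}^l be a classical solution of the regularized thin-film system on the graph on [0,T] with 1 ≤ n ≤ 2. Assume: (a) for every t ∈ [0,T] there exists s₀ ∈ [0,1] with ∑_{j=1}^l [ u_j(s₀,t) w_j(s₀,t) + (1/2)(∂_s u_j(s₀,t))² ] ≤ 0, and (b) there is a constant C > 0 such that ∑_{j=1}^l ∫₀¹ |u_j(s,t)|^{2−n} ds ≤ C for all t ∈ [0,T]. Then the energy E(t) := (1/2)∑_{j=1}^l ∫₀¹ (∂_s u_j(s,t))² ds satisfies the algebraic decay estimate E(t) ≤ E(0) / (1 + (9/C) E(0) t) for all t ∈ [0,T]. -/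

import Mathlib

open Set MeasureTheory intervalIntegral Real Filter

/-- The regularized mobility `f_ε(z) = |z|^n + ε`. -/
noncomputable def tfeF (n ε z : ℝ) : ℝ := |z| ^ n + ε

/-- `w = -∂_s² u` for a function `u = u(s,t)` of two variables. -/
noncomputable def tfeW (u : ℝ → ℝ → ℝ) (s t : ℝ) : ℝ :=
  -(iteratedDeriv 2 (fun x => u x t) s)

/-- A classical solution of the regularized thin-film system on a metric graph with
edges `j : Fin l` (parameterized over `[0,1]`, with tail vertex `tl j` at `s = 0` and
head vertex `hd j` at `s = 1`), boundary vertex set `bdry`, on the time interval `[0,T]`. -/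
structure IsGraphTFESolution {l m : ℕ} (n ε T : ℝ) (tl hd : Fin l → Fin m)
    (bdry : Set (Fin m)) (u : Fin l → ℝ → ℝ → ℝ) : Prop where
  /-- regularity (in particular `C^{4,1}`) -/
  smooth : ∀ j, ContDiff ℝ 4 (fun p : ℝ × ℝ => u j p.1 p.2)
  /-- the PDE `∂_t u_j = ∂_s (f_ε(u_j) ∂_s w_j)` -/
  pde : ∀ j, ∀ s ∈ Icc (0:ℝ) 1, ∀ t ∈ Icc (0:ℝ) T,
    deriv (fun τ => u j s τ) t
      = deriv (fun x => tfeF n ε (u j x t) * deriv (fun y => tfeW (u j) y t) x) s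
  /-- continuity of `u` at interior vertices -/
  cont_u_hh : ∀ a ∉ bdry, ∀ t ∈ Icc (0:ℝ) T, ∀ j j', hd j = a → hd j' = a →
    u j 1 t = u j' 1 t
  cont_u_tt : ∀ a ∉ bdry, ∀ t ∈ Icc (0:ℝ) T, ∀ i i', tl i = a → tl i' = a →
    u i 0 t = u i' 0 t
  cont_u_ht : ∀ a ∉ bdry, ∀ t ∈ Icc (0:ℝ) T, ∀ j i, hd j = a → tl i = a →
    u j 1 t = u i 0 t
  /-- continuity of `w` at interior vertices -/
  cont_w_hh : ∀ a ∉ bdry, ∀ t ∈ Icc (0:ℝ) T, ∀ j j', hd j = a → hd j' = a →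
    tfeW (u j) 1 t = tfeW (u j') 1 t
  cont_w_tt : ∀ a ∉ bdry, ∀ t ∈ Icc (0:ℝ) T, ∀ i i', tl i = a → tl i' = a →
    tfeW (u i) 0 t = tfeW (u i') 0 t
  cont_w_ht : ∀ a ∉ bdry, ∀ t ∈ Icc (0:ℝ) T, ∀ j i, hd j = a → tl i = a →
    tfeW (u j) 1 t = tfeW (u i) 0 t
  /-- Kirchhoff balance of `∂_s u` at interior vertices -/
  kirchhoff_u : ∀ a ∉ bdry, ∀ t ∈ Icc (0:ℝ) T,
    ∑ j ∈ Finset.univ.filter (fun j => hd j = a), deriv (fun x => u j x t) 1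
      = ∑ i ∈ Finset.univ.filter (fun i => tl i = a), deriv (fun x => u i x t) 0
  /-- Kirchhoff balance of `∂_s w` at interior vertices -/
  kirchhoff_w : ∀ a ∉ bdry, ∀ t ∈ Icc (0:ℝ) T,
    ∑ j ∈ Finset.univ.filter (fun j => hd j = a), deriv (fun x => tfeW (u j) x t) 1
      = ∑ i ∈ Finset.univ.filter (fun i => tl i = a), deriv (fun x => tfeW (u i) x t) 0
  /-- no-flux conditions at boundary vertices (head side) -/
  bdry_head : ∀ a ∈ bdry, ∀ t ∈ Icc (0:ℝ) T, ∀ j, hd j = a →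
    deriv (fun x => u j x t) 1 = 0 ∧ deriv (fun x => tfeW (u j) x t) 1 = 0
  /-- no-flux conditions at boundary vertices (tail side) -/
  bdry_tail : ∀ a ∈ bdry, ∀ t ∈ Icc (0:ℝ) T, ∀ i, tl i = a →
    deriv (fun x => u i x t) 0 = 0 ∧ deriv (fun x => tfeW (u i) x t) 0 = 0

/-!
Along the flow the energy `E` is dissipated at the rate `D = ∑ⱼ ∫ f_ε(uⱼ) (∂_s wⱼ)²`. The function
`P = ∑ⱼ (uⱼ wⱼ + (∂_s uⱼ)² / 2)` has `∂_s P = ∑ⱼ uⱼ ∂_s wⱼ` and, integrating by parts on the graph,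
`∫ P = 3 E`. As `P ≤ 0` somewhere, `3 E ≤ ∑ⱼ ∫ |uⱼ ∂_s wⱼ|`. Since `u² ≤ f_ε(u) |u|^(2 - n)`,
Cauchy–Schwarz bounds the square of the right-hand side by `C D`. Hence `E' ≤ -(9 / C) E²`, and
integrating this Riccati inequality for `1 / E` gives the decay. The vertex conditions make all
boundary terms cancel: the product of a function continuous at the vertices and a flux satisfying
Kirchhoff's law has vanishing total flux.
-/

open Function

section Riccati

variable {E E' : ℝ → ℝ} {k : ℝ}

lemma inv_add_mul_le_inv_of_hasDerivAt_le_neg_mul_sq {a b : ℝ} (hab : a ≤ b)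
    (hcont : ContinuousOn E (Icc a b)) (hderiv : ∀ x ∈ Ioo a b, HasDerivAt E (E' x) x)
    (hle : ∀ x ∈ Ioo a b, E' x ≤ -(k * E x ^ 2)) (hpos : ∀ x ∈ Icc a b, 0 < E x) :
    (E a)⁻¹ + k * (b - a) ≤ (E b)⁻¹ := by
  have hmono : MonotoneOn (fun x => (E x)⁻¹ - k * x) (Icc a b) := by
    refine monotoneOn_of_hasDerivWithinAt_nonneg (f' := fun x => -E' x / E x ^ 2 - k * 1)
      (convex_Icc a b) ((hcont.inv₀ fun x hx => (hpos x hx).ne').sub (by fun_prop)) ?_ ?_ <;>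
      rw [interior_Icc]
    · intro x hx
      exact (((hderiv x hx).inv (hpos x (Ioo_subset_Icc_self hx)).ne').sub
        ((hasDerivAt_id x).const_mul k)).hasDerivWithinAt
    · intro x hx
      have hsq : 0 < E x ^ 2 := pow_pos (hpos x (Ioo_subset_Icc_self hx)) 2
      have hk : k ≤ -E' x / E x ^ 2 := by
        rw [le_div_iff₀ hsq]
        linarith [hle x hx]
      linarith
  have hends := hmono (left_mem_Icc.2 hab) (right_mem_Icc.2 hab) hab
  linarith

lemma le_div_one_add_mul_of_hasDerivAt_le_neg_mul_sq {T : ℝ} (hk : 0 ≤ k)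
    (hcont : ContinuousOn E (Icc 0 T)) (hderiv : ∀ x ∈ Ioo 0 T, HasDerivAt E (E' x) x)
    (hle : ∀ x ∈ Ioo 0 T, E' x ≤ -(k * E x ^ 2)) (hnonneg : ∀ x ∈ Icc 0 T, 0 ≤ E x)
    {t : ℝ} (ht : t ∈ Icc 0 T) :
    E t ≤ E 0 / (1 + k * E 0 * t) := by
  have hanti : AntitoneOn E (Icc 0 T) := by
    refine antitoneOn_of_hasDerivWithinAt_nonpos (f' := E') (convex_Icc 0 T) hcont ?_ ?_ <;>
      rw [interior_Icc]
    · exact fun x hx => (hderiv x hx).hasDerivWithinAt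
    · exact fun x hx => (hle x hx).trans (neg_nonpos.2 (by positivity))
  have hE0 : 0 ≤ E 0 := hnonneg 0 ⟨le_rfl, ht.1.trans ht.2⟩
  have hden : 0 < 1 + k * E 0 * t := by
    have := mul_nonneg (mul_nonneg hk hE0) ht.1
    linarith
  rcases (hnonneg t ht).eq_or_lt with hzero | hpos
  · rw [← hzero]
    exact div_nonneg hE0 hden.le
  · have hposOn : ∀ x ∈ Icc 0 t, 0 < E x := fun x hx =>
      hpos.trans_le (hanti ⟨hx.1, hx.2.trans ht.2⟩ ht hx.2)
    have hinv := inv_add_mul_le_inv_of_hasDerivAt_le_neg_mul_sq ht.1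
      (hcont.mono (Icc_subset_Icc_right ht.2))
      (fun x hx => hderiv x ⟨hx.1, hx.2.trans_le ht.2⟩)
      (fun x hx => hle x ⟨hx.1, hx.2.trans_le ht.2⟩) hposOn
    have hE0pos : 0 < E 0 := hposOn 0 ⟨le_rfl, ht.1⟩
    calc E t ≤ ((E 0)⁻¹ + k * (t - 0))⁻¹ := le_inv_of_le_inv₀
          (add_pos_of_pos_of_nonneg (inv_pos.2 hE0pos) (mul_nonneg hk (by linarith [ht.1]))) hinv
      _ = E 0 / (1 + k * E 0 * t) := by field_simp; ring

end Riccati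

section Integration

lemma sq_integral_le_integral_mul_integral {α : Type*} [MeasurableSpace α] {μ : Measure α}
    {f g r : α → ℝ} (hf : Integrable f μ) (hg : Integrable g μ) (hr : Integrable r μ)
    (hf0 : ∀ x, 0 ≤ f x) (hg0 : ∀ x, 0 ≤ g x) (hrfg : ∀ x, r x ^ 2 ≤ f x * g x) :
    (∫ x, r x ∂μ) ^ 2 ≤ (∫ x, f x ∂μ) * ∫ x, g x ∂μ := by
  have hquad : ∀ c : ℝ, 0 ≤ (∫ x, f x ∂μ) * (c * c) + (-2 * ∫ x, r x ∂μ) * c + ∫ x, g x ∂μ := by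
    intro c
    have hpointwise : ∀ x, 2 * (r x * c) ≤ f x * (c * c) + g x := fun x =>
      two_mul_le_add_of_sq_le_mul (mul_nonneg (hf0 x) (mul_self_nonneg c)) (hg0 x)
        (by nlinarith [mul_le_mul_of_nonneg_right (hrfg x) (sq_nonneg c)])
    have hint := integral_mono ((hr.mul_const c).const_mul 2)
      ((hf.mul_const (c * c)).add hg) hpointwise
    simp only [Pi.add_apply] at hint
    rw [MeasureTheory.integral_add (hf.mul_const _) hg, MeasureTheory.integral_const_mul,
      MeasureTheory.integral_mul_const, MeasureTheory.integral_mul_const] at hint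
    linarith
  have hdiscrim := discrim_le_zero hquad
  rw [discrim] at hdiscrim
  linarith

variable {F F' : ℝ → ℝ} {a b : ℝ}

lemma sub_le_integral_abs_of_hasDerivAt (hF : ∀ x ∈ Icc a b, HasDerivAt F (F' x) x)
    (hF' : IntervalIntegrable F' volume a b) {x y : ℝ} (hx : x ∈ Icc a b) (hy : y ∈ Icc a b) :
    F y - F x ≤ ∫ s in a..b, |F' s| := by
  have hab : a ≤ b := hx.1.trans hx.2
  have hxy : uIcc x y ⊆ Icc a b := ordConnected_Icc.uIcc_subset hx hy
  have hxy' : uIoc x y ⊆ uIoc a b := by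
    rw [uIoc_of_le hab]
    exact Ioc_subset_Ioc (le_min hx.1 hy.1) (max_le hx.2 hy.2)
  calc F y - F x = ∫ s in x..y, F' s :=
        (integral_eq_sub_of_hasDerivAt (fun s hs => hF s (hxy hs))
          (hF'.mono_set (uIcc_of_le hab ▸ hxy))).symm
    _ ≤ |∫ s in x..y, F' s| := le_abs_self _
    _ ≤ |(∫ s in x..y, |F' s|)| := by
        simpa only [norm_eq_abs] using norm_integral_le_abs_integral_norm (f := F')
    _ ≤ |(∫ s in a..b, |F' s|)| := abs_integral_mono_interval hxy'
        (Eventually.of_forall fun _ => abs_nonneg _) hF'.abs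
    _ = ∫ s in a..b, |F' s| := abs_of_nonneg (integral_nonneg hab fun _ _ => abs_nonneg _)

lemma integral_le_mul_integral_abs_of_hasDerivAt (hF : ∀ x ∈ Icc a b, HasDerivAt F (F' x) x)
    (hF' : IntervalIntegrable F' volume a b) {x₀ : ℝ} (hx₀ : x₀ ∈ Icc a b) (hFx₀ : F x₀ ≤ 0) :
    ∫ x in a..b, F x ≤ (b - a) * ∫ x in a..b, |F' x| := by
  have hab : a ≤ b := hx₀.1.trans hx₀.2
  have hFcont : ContinuousOn F (uIcc a b) := by
    rw [uIcc_of_le hab]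
    exact fun x hx => (hF x hx).continuousAt.continuousWithinAt
  calc ∫ x in a..b, F x ≤ ∫ _ in a..b, ∫ s in a..b, |F' s| := by
        refine integral_mono_on hab hFcont.intervalIntegrable intervalIntegrable_const
          fun x hx => ?_
        linarith [sub_le_integral_abs_of_hasDerivAt hF hF' hx₀ hx]
    _ = (b - a) * ∫ s in a..b, |F' s| := by rw [intervalIntegral.integral_const, smul_eq_mul]

lemma absolutelyContinuousOnInterval_of_locallyLipschitz {X : Type*} [PseudoMetricSpace X]
    {f : ℝ → X} (hf : LocallyLipschitz f) (a b : ℝ) : AbsolutelyContinuousOnInterval f a b := by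
  obtain ⟨K, hK⟩ := hf.locallyLipschitzOn.exists_lipschitzOnWith_of_compact isCompact_uIcc
  exact hK.absolutelyContinuousOnInterval

end Integration

section Mobility

variable {n : ℝ}

lemma convexOn_abs_rpow (hn : 1 ≤ n) : ConvexOn ℝ univ fun z : ℝ => |z| ^ n := by
  refine ⟨convex_univ, fun x _ y _ p q hp hq hpq => ?_⟩
  calc |p • x + q • y| ^ n ≤ (p • |x| + q • |y|) ^ n := by
        refine rpow_le_rpow (abs_nonneg _) ?_ (by linarith)
        simpa [abs_mul, abs_of_nonneg hp, abs_of_nonneg hq] using abs_add_le (p * x) (q * y)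
    _ ≤ p • |x| ^ n + q • |y| ^ n :=
        (convexOn_rpow hn).2 (abs_nonneg x) (abs_nonneg y) hp hq hpq

lemma locallyLipschitz_tfeF (hn : 1 ≤ n) (ε : ℝ) : LocallyLipschitz (tfeF n ε) :=
  ((convexOn_abs_rpow hn).add (convexOn_const ε convex_univ)).locallyLipschitz

lemma continuous_tfeF (hn : 0 ≤ n) (ε : ℝ) : Continuous (tfeF n ε) :=
  (continuous_abs.rpow_const fun _ => Or.inr hn).add continuous_const

lemma tfeF_nonneg {ε : ℝ} (hε : 0 ≤ ε) (n z : ℝ) : 0 ≤ tfeF n ε z := by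
  unfold tfeF
  positivity

lemma sq_le_tfeF_mul_abs_rpow {ε : ℝ} (hε : 0 ≤ ε) (n z : ℝ) :
    z ^ 2 ≤ tfeF n ε z * |z| ^ (2 - n) :=
  calc z ^ 2 = |z| ^ n * |z| ^ (2 - n) := by
        rw [← rpow_add' (abs_nonneg z) (by norm_num), add_sub_cancel, rpow_two, sq_abs]
    _ ≤ tfeF n ε z * |z| ^ (2 - n) := by
        gcongr
        exact le_add_of_nonneg_right hε

end Mobility

section PartialDerivatives

variable {G : Type*} [NormedAddCommGroup G] [NormedSpace ℝ G] {F : ℝ → ℝ → G}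

/-- The partial derivative `∂_s F` with respect to the first variable. -/
noncomputable def spaceDeriv (F : ℝ → ℝ → G) (s t : ℝ) : G := deriv (fun x => F x t) s

/-- The partial derivative `∂_t F` with respect to the second variable. -/
noncomputable def timeDeriv (F : ℝ → ℝ → G) (s t : ℝ) : G := deriv (fun τ => F s τ) t

lemma hasDerivAt_fderiv_space {s t : ℝ} (h : DifferentiableAt ℝ (uncurry F) (s, t)) :
    HasDerivAt (fun x => F x t) (fderiv ℝ (uncurry F) (s, t) (1, 0)) s :=
  h.hasFDerivAt.comp_hasDerivAt (f := fun x => (x, t)) s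
    ((hasDerivAt_id s).prodMk (hasDerivAt_const s t))

lemma hasDerivAt_fderiv_time {s t : ℝ} (h : DifferentiableAt ℝ (uncurry F) (s, t)) :
    HasDerivAt (fun τ => F s τ) (fderiv ℝ (uncurry F) (s, t) (0, 1)) t :=
  h.hasFDerivAt.comp_hasDerivAt (f := fun τ => (s, τ)) t
    ((hasDerivAt_const t s).prodMk (hasDerivAt_id t))

lemma hasDerivAt_spaceDeriv (h : Differentiable ℝ (uncurry F)) (s t : ℝ) :
    HasDerivAt (fun x => F x t) (spaceDeriv F s t) s :=
  (hasDerivAt_fderiv_space (h (s, t))).differentiableAt.hasDerivAt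

lemma hasDerivAt_timeDeriv (h : Differentiable ℝ (uncurry F)) (s t : ℝ) :
    HasDerivAt (fun τ => F s τ) (timeDeriv F s t) t :=
  (hasDerivAt_fderiv_time (h (s, t))).differentiableAt.hasDerivAt

lemma uncurry_spaceDeriv (h : Differentiable ℝ (uncurry F)) :
    uncurry (spaceDeriv F) = fun p => fderiv ℝ (uncurry F) p (1, 0) :=
  funext fun p => (hasDerivAt_fderiv_space (h p)).deriv

lemma uncurry_timeDeriv (h : Differentiable ℝ (uncurry F)) :
    uncurry (timeDeriv F) = fun p => fderiv ℝ (uncurry F) p (0, 1) :=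
  funext fun p => (hasDerivAt_fderiv_time (h p)).deriv

variable {k r : WithTop ℕ∞}

lemma contDiff_spaceDeriv (h : ContDiff ℝ r (uncurry F)) (hkr : k + 1 ≤ r) :
    ContDiff ℝ k (uncurry (spaceDeriv F)) := by
  rw [uncurry_spaceDeriv ((h.of_le (le_add_self.trans hkr)).differentiable one_ne_zero)]
  exact (h.fderiv_right hkr).clm_apply contDiff_const

lemma contDiff_timeDeriv (h : ContDiff ℝ r (uncurry F)) (hkr : k + 1 ≤ r) :
    ContDiff ℝ k (uncurry (timeDeriv F)) := by
  rw [uncurry_timeDeriv ((h.of_le (le_add_self.trans hkr)).differentiable one_ne_zero)]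
  exact (h.fderiv_right hkr).clm_apply contDiff_const

lemma timeDeriv_spaceDeriv_comm (h : ContDiff ℝ 2 (uncurry F)) (s t : ℝ) :
    timeDeriv (spaceDeriv F) s t = spaceDeriv (timeDeriv F) s t := by
  have hF : Differentiable ℝ (uncurry F) := h.differentiable two_ne_zero
  have hS : Differentiable ℝ (uncurry (spaceDeriv F)) :=
    (contDiff_spaceDeriv (k := 1) h (by norm_num)).differentiable one_ne_zero
  have hT : Differentiable ℝ (uncurry (timeDeriv F)) :=
    (contDiff_timeDeriv (k := 1) h (by norm_num)).differentiable one_ne_zero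
  have hD : DifferentiableAt ℝ (fderiv ℝ (uncurry F)) (s, t) :=
    (h.fderiv_right (m := 1) (by norm_num)).differentiable one_ne_zero _
  calc timeDeriv (spaceDeriv F) s t
      = fderiv ℝ (fderiv ℝ (uncurry F)) (s, t) (0, 1) (1, 0) := by
        rw [timeDeriv, (hasDerivAt_fderiv_time (hS (s, t))).deriv, uncurry_spaceDeriv hF,
          fderiv_clm_apply hD (differentiableAt_const _)]
        simp
    _ = fderiv ℝ (fderiv ℝ (uncurry F)) (s, t) (1, 0) (0, 1) :=
        h.contDiffAt.isSymmSndFDerivAt (by simp) (0, 1) (1, 0)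
    _ = spaceDeriv (timeDeriv F) s t := by
        rw [spaceDeriv, (hasDerivAt_fderiv_space (hT (s, t))).deriv, uncurry_timeDeriv hF,
          fderiv_clm_apply hD (differentiableAt_const _)]
        simp

lemma hasDerivAt_integral_timeDeriv (h : ContDiff ℝ 1 (uncurry F)) (a b t : ℝ) :
    HasDerivAt (fun τ => ∫ s in a..b, F s τ) (∫ s in a..b, timeDeriv F s t) t := by
  have hT : Continuous (uncurry (timeDeriv F)) :=
    (contDiff_timeDeriv (k := 0) h (by norm_num)).continuous
  obtain ⟨M, hM⟩ := (isCompact_uIcc.prod (isCompact_closedBall t 1)).exists_bound_of_continuousOn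
    (s := uIcc a b ×ˢ Metric.closedBall t 1) hT.continuousOn
  refine (intervalIntegral.hasDerivAt_integral_of_dominated_loc_of_deriv_le
    (F := fun τ s => F s τ) (F' := fun τ s => timeDeriv F s τ) (bound := fun _ => M)
    (Metric.closedBall_mem_nhds t one_pos) ?_ ?_ ?_ ?_ ?_ ?_).2
  · exact Eventually.of_forall fun τ => (h.continuous.uncurry_right τ).aestronglyMeasurable
  · exact (h.continuous.uncurry_right t).intervalIntegrable a b
  · exact (hT.uncurry_right t).aestronglyMeasurable
  · exact Eventually.of_forall fun s hs τ hτ => hM (s, τ) ⟨uIoc_subset_uIcc hs, hτ⟩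
  · exact intervalIntegrable_const
  · exact Eventually.of_forall fun s _ τ _ =>
      hasDerivAt_timeDeriv (h.differentiable one_ne_zero) s τ

lemma absolutelyContinuousOnInterval_slice (h : ContDiff ℝ 1 (uncurry F)) (t a b : ℝ) :
    AbsolutelyContinuousOnInterval (fun s => F s t) a b :=
  absolutelyContinuousOnInterval_of_locallyLipschitz
    (h.comp (contDiff_id.prodMk contDiff_const)).locallyLipschitz a b

end PartialDerivatives

section VertexConditions

variable {ι V : Type*}

/-- Continuity across interior vertices of a function on a metric graph, given as a family of
functions on the edges, whose values at `0` and `1` are attached to the tail and the head. -/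
structure IsVertexContinuous (tl hd : ι → V) (bdry : Set V) (f : ι → ℝ → ℝ) : Prop where
  head_head : ∀ a ∉ bdry, ∀ j j', hd j = a → hd j' = a → f j 1 = f j' 1
  tail_tail : ∀ a ∉ bdry, ∀ i i', tl i = a → tl i' = a → f i 0 = f i' 0
  head_tail : ∀ a ∉ bdry, ∀ j i, hd j = a → tl i = a → f j 1 = f i 0

/-- The Kirchhoff condition for a flux on a metric graph: inflow equals outflow at interior
vertices, and the flux vanishes on every edge end at a boundary vertex. -/
structure IsVertexBalanced [Fintype ι] [DecidableEq V] (tl hd : ι → V) (bdry : Set V)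
    (g : ι → ℝ → ℝ) : Prop where
  kirchhoff : ∀ a ∉ bdry, ∑ j with hd j = a, g j 1 = ∑ i with tl i = a, g i 0
  head_eq_zero : ∀ a ∈ bdry, ∀ j, hd j = a → g j 1 = 0
  tail_eq_zero : ∀ a ∈ bdry, ∀ i, tl i = a → g i 0 = 0

variable {tl hd : ι → V} {bdry : Set V} {f g : ι → ℝ → ℝ}

lemma IsVertexContinuous.comp (hf : IsVertexContinuous tl hd bdry f) (φ : ℝ → ℝ) :
    IsVertexContinuous tl hd bdry fun j s => φ (f j s) where
  head_head a ha j j' hj hj' := congrArg φ (hf.head_head a ha j j' hj hj')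
  tail_tail a ha i i' hi hi' := congrArg φ (hf.tail_tail a ha i i' hi hi')
  head_tail a ha j i hj hi := congrArg φ (hf.head_tail a ha j i hj hi)

lemma IsVertexContinuous.exists_vertex_value (hf : IsVertexContinuous tl hd bdry f) {a : V}
    (ha : a ∉ bdry) : ∃ c, (∀ j, hd j = a → f j 1 = c) ∧ ∀ i, tl i = a → f i 0 = c := by
  by_cases hhead : ∃ j, hd j = a
  · obtain ⟨j, hj⟩ := hhead
    exact ⟨f j 1, fun j' hj' => hf.head_head a ha j' j hj' hj,
      fun i hi => (hf.head_tail a ha j i hj hi).symm⟩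
  · by_cases htail : ∃ i, tl i = a
    · obtain ⟨i, hi⟩ := htail
      exact ⟨f i 0, fun j hj => hf.head_tail a ha j i hj hi,
        fun i' hi' => hf.tail_tail a ha i' i hi' hi⟩
    · exact ⟨0, fun j hj => (hhead ⟨j, hj⟩).elim, fun i hi => (htail ⟨i, hi⟩).elim⟩

variable [Fintype ι] [DecidableEq V]

lemma IsVertexBalanced.mul_left (hg : IsVertexBalanced tl hd bdry g)
    (hf : IsVertexContinuous tl hd bdry f) :
    IsVertexBalanced tl hd bdry fun j s => f j s * g j s where
  kirchhoff a ha := by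
    obtain ⟨c, hhead, htail⟩ := hf.exists_vertex_value ha
    calc ∑ j with hd j = a, f j 1 * g j 1 = c * ∑ j with hd j = a, g j 1 := by
          rw [Finset.mul_sum]
          exact Finset.sum_congr rfl fun j hj => by rw [hhead j (Finset.mem_filter.1 hj).2]
      _ = c * ∑ i with tl i = a, g i 0 := by rw [hg.kirchhoff a ha]
      _ = ∑ i with tl i = a, f i 0 * g i 0 := by
          rw [Finset.mul_sum]
          exact Finset.sum_congr rfl fun i hi => by rw [htail i (Finset.mem_filter.1 hi).2]
  head_eq_zero a ha j hj := by rw [hg.head_eq_zero a ha j hj, mul_zero]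
  tail_eq_zero a ha i hi := by rw [hg.tail_eq_zero a ha i hi, mul_zero]

lemma IsVertexBalanced.sum_head_eq_sum_tail (hg : IsVertexBalanced tl hd bdry g) :
    ∑ j, g j 1 = ∑ j, g j 0 := by
  rw [← Finset.sum_fiberwise_of_maps_to (t := Finset.univ.image hd ∪ Finset.univ.image tl)
      (g := hd) (by simp),
    ← Finset.sum_fiberwise_of_maps_to (t := Finset.univ.image hd ∪ Finset.univ.image tl)
      (g := tl) (by simp)]
  refine Finset.sum_congr rfl fun a _ => ?_
  by_cases ha : a ∈ bdry
  · rw [Finset.sum_eq_zero fun j hj => hg.head_eq_zero a ha j (Finset.mem_filter.1 hj).2,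
      Finset.sum_eq_zero fun i hi => hg.tail_eq_zero a ha i (Finset.mem_filter.1 hi).2]
  · exact hg.kirchhoff a ha

lemma sum_integral_mul_deriv_eq_neg (hf : IsVertexContinuous tl hd bdry f)
    (hg : IsVertexBalanced tl hd bdry g)
    (hfac : ∀ j, AbsolutelyContinuousOnInterval (f j) 0 1)
    (hgac : ∀ j, AbsolutelyContinuousOnInterval (g j) 0 1) :
    ∑ j, ∫ s in 0..1, f j s * deriv (g j) s = -∑ j, ∫ s in 0..1, deriv (f j) s * g j s := by
  rw [Finset.sum_congr rfl fun j _ => (hfac j).integral_mul_deriv_eq_deriv_mul (hgac j),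
    Finset.sum_sub_distrib, Finset.sum_sub_distrib, (hg.mul_left hf).sum_head_eq_sum_tail]
  ring

end VertexConditions

section ThinFilm

variable {u : ℝ → ℝ → ℝ}

lemma tfeW_eq_neg_spaceDeriv (u : ℝ → ℝ → ℝ) (s t : ℝ) :
    tfeW u s t = -spaceDeriv (spaceDeriv u) s t := by
  rw [tfeW, iteratedDeriv_succ, iteratedDeriv_one]
  rfl

lemma contDiff_tfeW {k r : WithTop ℕ∞} (h : ContDiff ℝ r (uncurry u)) (hkr : k + 1 + 1 ≤ r) :
    ContDiff ℝ k (uncurry (tfeW u)) := by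
  have hneg : uncurry (tfeW u) = -uncurry (spaceDeriv (spaceDeriv u)) :=
    funext fun p => tfeW_eq_neg_spaceDeriv u p.1 p.2
  rw [hneg]
  exact (contDiff_spaceDeriv (contDiff_spaceDeriv h hkr) le_rfl).neg

/-- The quantity `u w + (∂_s u)² / 2`, a first integral of the steady equation `∂_s w = 0`:
its space derivative is `u ∂_s w`. -/
noncomputable def firstIntegral (u : ℝ → ℝ → ℝ) (s t : ℝ) : ℝ :=
  u s t * tfeW u s t + (1 / 2) * spaceDeriv u s t ^ 2

lemma hasDerivAt_firstIntegral (h : ContDiff ℝ 3 (uncurry u)) (s t : ℝ) :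
    HasDerivAt (fun x => firstIntegral u x t) (u s t * spaceDeriv (tfeW u) s t) s := by
  have hu := hasDerivAt_spaceDeriv (h.differentiable three_ne_zero) s t
  have hS := hasDerivAt_spaceDeriv
    ((contDiff_spaceDeriv (k := 2) h (by norm_num)).differentiable two_ne_zero) s t
  have hW := hasDerivAt_spaceDeriv
    ((contDiff_tfeW (k := 1) h (by norm_num)).differentiable one_ne_zero) s t
  refine ((hu.mul hW).add ((hS.pow 2).const_mul (1 / 2))).congr_deriv ?_
  rw [tfeW_eq_neg_spaceDeriv]
  ring

variable {ι : Type*} [Fintype ι] {v : ι → ℝ → ℝ → ℝ}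

/-- The energy `E(t) = ½ ∑ⱼ ∫₀¹ (∂_s vⱼ)² ds` of a family of functions on the edges of a graph. -/
noncomputable def graphEnergy (v : ι → ℝ → ℝ → ℝ) (t : ℝ) : ℝ :=
  (1 / 2) * ∑ j, ∫ s in (0 : ℝ)..1, spaceDeriv (v j) s t ^ 2

/-- The dissipation `∑ⱼ ∫₀¹ f_ε(vⱼ) (∂_s wⱼ)² ds`, the rate at which a solution loses energy. -/
noncomputable def graphDissipation (n ε : ℝ) (v : ι → ℝ → ℝ → ℝ) (t : ℝ) : ℝ :=
  ∑ j, ∫ s in (0 : ℝ)..1, tfeF n ε (v j s t) * spaceDeriv (tfeW (v j)) s t ^ 2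

lemma graphEnergy_nonneg (v : ι → ℝ → ℝ → ℝ) (t : ℝ) : 0 ≤ graphEnergy v t :=
  mul_nonneg (by norm_num) <| Finset.sum_nonneg fun _ _ =>
    integral_nonneg zero_le_one fun _ _ => sq_nonneg _

lemma graphDissipation_nonneg {ε : ℝ} (hε : 0 ≤ ε) (n : ℝ) (v : ι → ℝ → ℝ → ℝ) (t : ℝ) :
    0 ≤ graphDissipation n ε v t :=
  Finset.sum_nonneg fun _ _ => integral_nonneg zero_le_one fun _ _ =>
    mul_nonneg (tfeF_nonneg hε _ _) (sq_nonneg _)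

lemma hasDerivAt_graphEnergy (hv : ∀ j, ContDiff ℝ 2 (uncurry (v j))) (t : ℝ) :
    HasDerivAt (graphEnergy v)
      (∑ j, ∫ s in 0..1, spaceDeriv (timeDeriv (v j)) s t * spaceDeriv (v j) s t) t := by
  have hS : ∀ j, ContDiff ℝ 1 (uncurry (spaceDeriv (v j))) := fun j =>
    contDiff_spaceDeriv (hv j) (by norm_num)
  have hsq : ∀ j s, timeDeriv (fun x τ => spaceDeriv (v j) x τ ^ 2) s t
      = 2 * (spaceDeriv (timeDeriv (v j)) s t * spaceDeriv (v j) s t) := fun j s => by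
    have hSt := hasDerivAt_timeDeriv ((hS j).differentiable one_ne_zero) s t
    rw [timeDeriv, (hSt.fun_pow 2).deriv, timeDeriv_spaceDeriv_comm (hv j)]
    ring
  have hE := (HasDerivAt.fun_sum fun j (_ : j ∈ Finset.univ) => hasDerivAt_integral_timeDeriv
    (F := fun s τ => spaceDeriv (v j) s τ ^ 2) ((hS j).pow 2) 0 1 t).const_mul (1 / 2)
  refine hE.congr_deriv ?_
  simp_rw [hsq, intervalIntegral.integral_const_mul, ← Finset.mul_sum]
  ring

lemma integral_sum_firstIntegral_le (hv : ∀ j, ContDiff ℝ 3 (uncurry (v j))) {s₀ t : ℝ}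
    (hs₀ : s₀ ∈ Icc 0 1) (hneg : ∑ j, firstIntegral (v j) s₀ t ≤ 0) :
    ∫ s in 0..1, ∑ j, firstIntegral (v j) s t
      ≤ ∑ j, ∫ s in 0..1, |v j s t * spaceDeriv (tfeW (v j)) s t| := by
  have hcont : ∀ j, Continuous fun s => v j s t * spaceDeriv (tfeW (v j)) s t := fun j =>
    ((hv j).continuous.uncurry_right t).mul ((contDiff_spaceDeriv (k := 0)
      (contDiff_tfeW (k := 1) (hv j) (by norm_num)) (by norm_num)).continuous.uncurry_right t)
  have hsum : Continuous fun s => ∑ j, v j s t * spaceDeriv (tfeW (v j)) s t :=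
    continuous_finsetSum _ fun j _ => hcont j
  calc ∫ s in 0..1, ∑ j, firstIntegral (v j) s t
      ≤ (1 - 0) * ∫ s in 0..1, |∑ j, v j s t * spaceDeriv (tfeW (v j)) s t| :=
        integral_le_mul_integral_abs_of_hasDerivAt
          (fun s _ => HasDerivAt.fun_sum fun j _ => hasDerivAt_firstIntegral (hv j) s t)
          (hsum.intervalIntegrable 0 1) hs₀ hneg
    _ ≤ ∫ s in 0..1, ∑ j, |v j s t * spaceDeriv (tfeW (v j)) s t| := by
        rw [sub_zero, one_mul]
        exact integral_mono_on zero_le_one (hsum.abs.intervalIntegrable 0 1)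
          ((continuous_finsetSum _ fun j _ => (hcont j).abs).intervalIntegrable 0 1)
          fun s _ => Finset.abs_sum_le_sum_abs _ _
    _ = ∑ j, ∫ s in 0..1, |v j s t * spaceDeriv (tfeW (v j)) s t| :=
        integral_finsetSum fun j _ => (hcont j).abs.intervalIntegrable 0 1

lemma sq_sum_integral_abs_le_graphDissipation_mul {n ε : ℝ} (hn0 : 0 ≤ n) (hn2 : n ≤ 2)
    (hε : 0 ≤ ε) (hv : ∀ j, ContDiff ℝ 3 (uncurry (v j))) (t : ℝ) :
    (∑ j, ∫ s in 0..1, |v j s t * spaceDeriv (tfeW (v j)) s t|) ^ 2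
      ≤ graphDissipation n ε v t * ∑ j, ∫ s in 0..1, |v j s t| ^ (2 - n) := by
  have hmobility : ∀ j s, 0 ≤ tfeF n ε (v j s t) * spaceDeriv (tfeW (v j)) s t ^ 2 := fun j s =>
    mul_nonneg (tfeF_nonneg hε n _) (sq_nonneg _)
  have hpower : ∀ j s, 0 ≤ |v j s t| ^ (2 - n) := fun j s => rpow_nonneg (abs_nonneg _) _
  refine Finset.sum_sq_le_sum_mul_sum_of_sq_le_mul _
    (fun j _ => integral_nonneg zero_le_one fun s _ => hmobility j s)
    (fun j _ => integral_nonneg zero_le_one fun s _ => hpower j s) fun j _ => ?_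
  have hcv : Continuous fun s => v j s t := (hv j).continuous.uncurry_right t
  have hcW : Continuous fun s => spaceDeriv (tfeW (v j)) s t := (contDiff_spaceDeriv (k := 0)
    (contDiff_tfeW (k := 1) (hv j) (by norm_num)) (by norm_num)).continuous.uncurry_right t
  have hpointwise : ∀ s, |v j s t * spaceDeriv (tfeW (v j)) s t| ^ 2
      ≤ tfeF n ε (v j s t) * spaceDeriv (tfeW (v j)) s t ^ 2 * |v j s t| ^ (2 - n) := fun s => by
    rw [sq_abs, mul_pow, mul_right_comm]
    exact mul_le_mul_of_nonneg_right (sq_le_tfeF_mul_abs_rpow hε n _) (sq_nonneg _)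
  simp only [integral_of_le zero_le_one]
  exact sq_integral_le_integral_mul_integral
    ((((continuous_tfeF hn0 ε).comp hcv).mul (hcW.pow 2)).intervalIntegrable 0 1).1
    ((hcv.abs.rpow_const fun _ => Or.inr (by linarith)).intervalIntegrable 0 1).1
    ((hcv.mul hcW).abs.intervalIntegrable 0 1).1 (hmobility j) (hpower j) hpointwise

end ThinFilm

namespace IsGraphTFESolution

variable {l m : ℕ} {n ε T : ℝ} {tl hd : Fin l → Fin m} {bdry : Set (Fin m)}
  {u : Fin l → ℝ → ℝ → ℝ} {t : ℝ}

lemma isVertexContinuous (hu : IsGraphTFESolution n ε T tl hd bdry u) (ht : t ∈ Icc 0 T) :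
    IsVertexContinuous tl hd bdry fun j s => u j s t where
  head_head a ha := hu.cont_u_hh a ha t ht
  tail_tail a ha := hu.cont_u_tt a ha t ht
  head_tail a ha := hu.cont_u_ht a ha t ht

lemma isVertexContinuous_tfeW (hu : IsGraphTFESolution n ε T tl hd bdry u) (ht : t ∈ Icc 0 T) :
    IsVertexContinuous tl hd bdry fun j s => tfeW (u j) s t where
  head_head a ha := hu.cont_w_hh a ha t ht
  tail_tail a ha := hu.cont_w_tt a ha t ht
  head_tail a ha := hu.cont_w_ht a ha t ht

lemma isVertexContinuous_timeDeriv (hu : IsGraphTFESolution n ε T tl hd bdry u)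
    (ht : t ∈ Ioo 0 T) : IsVertexContinuous tl hd bdry fun j s => timeDeriv (u j) s t := by
  have hagree : ∀ j i (x y : ℝ), (∀ τ ∈ Icc 0 T, u j x τ = u i y τ) →
      timeDeriv (u j) x t = timeDeriv (u i) y t := fun j i x y hxy =>
    (eventuallyEq_of_mem (Icc_mem_nhds ht.1 ht.2) hxy).deriv_eq
  exact
    { head_head := fun a ha j j' hj hj' => hagree j j' 1 1 fun τ hτ =>
        (hu.isVertexContinuous hτ).head_head a ha j j' hj hj'
      tail_tail := fun a ha i i' hi hi' => hagree i i' 0 0 fun τ hτ =>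
        (hu.isVertexContinuous hτ).tail_tail a ha i i' hi hi'
      head_tail := fun a ha j i hj hi => hagree j i 1 0 fun τ hτ =>
        (hu.isVertexContinuous hτ).head_tail a ha j i hj hi }

lemma isVertexBalanced_spaceDeriv (hu : IsGraphTFESolution n ε T tl hd bdry u)
    (ht : t ∈ Icc 0 T) : IsVertexBalanced tl hd bdry fun j s => spaceDeriv (u j) s t where
  kirchhoff a ha := hu.kirchhoff_u a ha t ht
  head_eq_zero a ha j hj := (hu.bdry_head a ha t ht j hj).1
  tail_eq_zero a ha i hi := (hu.bdry_tail a ha t ht i hi).1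

lemma isVertexBalanced_spaceDeriv_tfeW (hu : IsGraphTFESolution n ε T tl hd bdry u)
    (ht : t ∈ Icc 0 T) :
    IsVertexBalanced tl hd bdry fun j s => spaceDeriv (tfeW (u j)) s t where
  kirchhoff a ha := hu.kirchhoff_w a ha t ht
  head_eq_zero a ha j hj := (hu.bdry_head a ha t ht j hj).2
  tail_eq_zero a ha i hi := (hu.bdry_tail a ha t ht i hi).2

lemma sum_integral_tfeW_mul_timeDeriv_eq (hu : IsGraphTFESolution n ε T tl hd bdry u)
    (hn : 1 ≤ n) (ht : t ∈ Icc 0 T) :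
    ∑ j, ∫ s in 0..1, tfeW (u j) s t * timeDeriv (u j) s t = -graphDissipation n ε u t := by
  have hW : ∀ j, ContDiff ℝ 2 (uncurry (tfeW (u j))) := fun j =>
    contDiff_tfeW (hu.smooth j) (by norm_num)
  have hu_slice : ∀ j, LocallyLipschitz fun s => u j s t := fun j =>
    (((hu.smooth j).of_le (by norm_num)).comp (contDiff_id.prodMk contDiff_const)).locallyLipschitz
  -- For `n = 1` the flux need not be differentiable where `u` vanishes, but it is absolutely
  -- continuous, which is all that integration by parts requires.
  have hflux : ∀ j, AbsolutelyContinuousOnInterval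
      (fun s => tfeF n ε (u j s t) * spaceDeriv (tfeW (u j)) s t) 0 1 := fun j =>
    (absolutelyContinuousOnInterval_of_locallyLipschitz
      ((locallyLipschitz_tfeF hn ε).comp (hu_slice j)) 0 1).fun_mul
      (absolutelyContinuousOnInterval_slice (contDiff_spaceDeriv (hW j) (by norm_num)) t 0 1)
  calc ∑ j, ∫ s in 0..1, tfeW (u j) s t * timeDeriv (u j) s t
      = ∑ j, ∫ s in 0..1, tfeW (u j) s t
          * deriv (fun x => tfeF n ε (u j x t) * spaceDeriv (tfeW (u j)) x t) s := by
        refine Finset.sum_congr rfl fun j _ => integral_congr fun s hs => ?_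
        rw [uIcc_of_le zero_le_one] at hs
        exact congrArg (tfeW (u j) s t * ·) (hu.pde j s hs t ht)
    _ = -∑ j, ∫ s in 0..1, spaceDeriv (tfeW (u j)) s t
          * (tfeF n ε (u j s t) * spaceDeriv (tfeW (u j)) s t) :=
        sum_integral_mul_deriv_eq_neg (hu.isVertexContinuous_tfeW ht)
          ((hu.isVertexBalanced_spaceDeriv_tfeW ht).mul_left
            ((hu.isVertexContinuous ht).comp (tfeF n ε)))
          (fun j => absolutelyContinuousOnInterval_slice ((hW j).of_le (by norm_num)) t 0 1) hflux
    _ = -graphDissipation n ε u t := by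
        simp only [graphDissipation, pow_two, mul_left_comm]

lemma hasDerivAt_graphEnergy_neg_graphDissipation (hu : IsGraphTFESolution n ε T tl hd bdry u)
    (hn : 1 ≤ n) (ht : t ∈ Ioo 0 T) :
    HasDerivAt (graphEnergy u) (-graphDissipation n ε u t) t := by
  have hsmooth : ∀ j, ContDiff ℝ 2 (uncurry (u j)) := fun j => (hu.smooth j).of_le (by norm_num)
  have hparts := sum_integral_mul_deriv_eq_neg (hu.isVertexContinuous_timeDeriv ht)
    (hu.isVertexBalanced_spaceDeriv (Ioo_subset_Icc_self ht))
    (fun j => absolutelyContinuousOnInterval_slice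
      (contDiff_timeDeriv (hsmooth j) (by norm_num)) t 0 1)
    (fun j => absolutelyContinuousOnInterval_slice
      (contDiff_spaceDeriv (hsmooth j) (by norm_num)) t 0 1)
  refine (hasDerivAt_graphEnergy hsmooth t).congr_deriv ?_
  calc ∑ j, ∫ s in 0..1, spaceDeriv (timeDeriv (u j)) s t * spaceDeriv (u j) s t
      = -∑ j, ∫ s in 0..1, timeDeriv (u j) s t * spaceDeriv (spaceDeriv (u j)) s t :=
        (neg_eq_iff_eq_neg.2 hparts).symm
    _ = ∑ j, ∫ s in 0..1, tfeW (u j) s t * timeDeriv (u j) s t := by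
        simp only [tfeW_eq_neg_spaceDeriv, mul_comm (timeDeriv _ _ _), neg_mul,
          intervalIntegral.integral_neg, Finset.sum_neg_distrib]
    _ = -graphDissipation n ε u t :=
        hu.sum_integral_tfeW_mul_timeDeriv_eq hn (Ioo_subset_Icc_self ht)

lemma integral_sum_firstIntegral_eq (hu : IsGraphTFESolution n ε T tl hd bdry u)
    (ht : t ∈ Icc 0 T) :
    ∫ s in 0..1, ∑ j, firstIntegral (u j) s t = 3 * graphEnergy u t := by
  have hsmooth : ∀ j, ContDiff ℝ 2 (uncurry (u j)) := fun j => (hu.smooth j).of_le (by norm_num)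
  have hS : ∀ j, ContDiff ℝ 1 (uncurry (spaceDeriv (u j))) := fun j =>
    contDiff_spaceDeriv (hsmooth j) (by norm_num)
  have huW : ∀ j, Continuous fun s => u j s t * tfeW (u j) s t := fun j =>
    ((hsmooth j).continuous.uncurry_right t).mul
      ((contDiff_tfeW (k := 0) (hsmooth j) (by norm_num)).continuous.uncurry_right t)
  have hSsq : ∀ j, Continuous fun s => (1 / 2) * spaceDeriv (u j) s t ^ 2 := fun j =>
    continuous_const.mul (((hS j).continuous.uncurry_right t).pow 2)
  have hparts : ∑ j, ∫ s in 0..1, u j s t * spaceDeriv (spaceDeriv (u j)) s t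
      = -∑ j, ∫ s in 0..1, spaceDeriv (u j) s t * spaceDeriv (u j) s t :=
    sum_integral_mul_deriv_eq_neg (hu.isVertexContinuous ht) (hu.isVertexBalanced_spaceDeriv ht)
      (fun j => absolutelyContinuousOnInterval_slice ((hsmooth j).of_le (by norm_num)) t 0 1)
      (fun j => absolutelyContinuousOnInterval_slice (hS j) t 0 1)
  calc ∫ s in 0..1, ∑ j, firstIntegral (u j) s t
      = ∑ j, ((∫ s in 0..1, u j s t * tfeW (u j) s t)
          + ∫ s in 0..1, (1 / 2) * spaceDeriv (u j) s t ^ 2) := by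
        simp only [firstIntegral]
        rw [integral_finsetSum fun j _ => ((huW j).fun_add (hSsq j)).intervalIntegrable 0 1]
        exact Finset.sum_congr rfl fun j _ => intervalIntegral.integral_add
          ((huW j).intervalIntegrable 0 1) ((hSsq j).intervalIntegrable 0 1)
    _ = -∑ j, (∫ s in 0..1, u j s t * spaceDeriv (spaceDeriv (u j)) s t) + graphEnergy u t := by
        simp only [Finset.sum_add_distrib, tfeW_eq_neg_spaceDeriv, mul_neg,
          intervalIntegral.integral_neg, Finset.sum_neg_distrib,
          intervalIntegral.integral_const_mul, ← Finset.mul_sum, graphEnergy]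
    _ = 3 * graphEnergy u t := by
        simp only [hparts, ← pow_two, graphEnergy]
        ring

lemma nine_mul_graphEnergy_sq_le (hu : IsGraphTFESolution n ε T tl hd bdry u)
    (hn0 : 0 ≤ n) (hn2 : n ≤ 2) (hε : 0 ≤ ε) (ht : t ∈ Icc 0 T) {s₀ C : ℝ} (hs₀ : s₀ ∈ Icc 0 1)
    (hneg : ∑ j, firstIntegral (u j) s₀ t ≤ 0)
    (hbound : ∑ j, ∫ s in 0..1, |u j s t| ^ (2 - n) ≤ C) :
    9 * graphEnergy u t ^ 2 ≤ graphDissipation n ε u t * C := by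
  have hsmooth : ∀ j, ContDiff ℝ 3 (uncurry (u j)) := fun j => (hu.smooth j).of_le (by norm_num)
  calc 9 * graphEnergy u t ^ 2 = (∫ s in 0..1, ∑ j, firstIntegral (u j) s t) ^ 2 := by
        rw [hu.integral_sum_firstIntegral_eq ht]
        ring
    _ ≤ (∑ j, ∫ s in 0..1, |u j s t * spaceDeriv (tfeW (u j)) s t|) ^ 2 := by
        refine pow_le_pow_left₀ ?_ (integral_sum_firstIntegral_le hsmooth hs₀ hneg) 2
        rw [hu.integral_sum_firstIntegral_eq ht]
        exact mul_nonneg (by norm_num) (graphEnergy_nonneg u t)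
    _ ≤ graphDissipation n ε u t * ∑ j, ∫ s in 0..1, |u j s t| ^ (2 - n) :=
        sq_sum_integral_abs_le_graphDissipation_mul hn0 hn2 hε hsmooth t
    _ ≤ graphDissipation n ε u t * C :=
        mul_le_mul_of_nonneg_left hbound (graphDissipation_nonneg hε n u t)

end IsGraphTFESolution

/-- algebraic decay of the energy for classical solutions of the
regularized thin-film system on a graph, `1 ≤ n ≤ 2`. -/
theorem energy_algebraic_decay {l m : ℕ} (hl : 1 ≤ l) (hm : 1 ≤ m)
    (n ε T : ℝ) (hn : 1 ≤ n) (hn2 : n ≤ 2) (hε : 0 < ε) (hT : 0 < T)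
    (tl hd : Fin l → Fin m) (bdry : Set (Fin m)) (u : Fin l → ℝ → ℝ → ℝ)
    (hu : IsGraphTFESolution n ε T tl hd bdry u)
    (hneg : ∀ t ∈ Icc (0:ℝ) T, ∃ s₀ ∈ Icc (0:ℝ) 1,
      ∑ j : Fin l,
        (u j s₀ t * tfeW (u j) s₀ t + (1 / 2) * (deriv (fun x => u j x t) s₀) ^ 2) ≤ 0)
    (C : ℝ) (hC : 0 < C)
    (hbound : ∀ t ∈ Icc (0:ℝ) T,
      ∑ j : Fin l, (∫ s in (0:ℝ)..1, |u j s t| ^ (2 - n)) ≤ C) :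
    ∀ t ∈ Icc (0:ℝ) T,
      (1 / 2) * ∑ j : Fin l, (∫ s in (0:ℝ)..1, (deriv (fun x => u j x t) s) ^ 2)
        ≤ ((1 / 2) * ∑ j : Fin l, (∫ s in (0:ℝ)..1, (deriv (fun x => u j x 0) s) ^ 2))
          / (1 + (9 / C)
              * ((1 / 2) * ∑ j : Fin l, (∫ s in (0:ℝ)..1, (deriv (fun x => u j x 0) s) ^ 2))
              * t) := by
  have hderiv : ∀ t ∈ Ioo 0 T, HasDerivAt (graphEnergy u) (-graphDissipation n ε u t) t :=
    fun t ht => hu.hasDerivAt_graphEnergy_neg_graphDissipation hn ht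
  have hcont : Continuous (graphEnergy u) := continuous_iff_continuousAt.2 fun t =>
    (hasDerivAt_graphEnergy (fun j => (hu.smooth j).of_le (by norm_num)) t).continuousAt
  have hriccati : ∀ t ∈ Ioo 0 T, -graphDissipation n ε u t ≤ -(9 / C * graphEnergy u t ^ 2) := by
    intro t ht
    have htIcc := Ioo_subset_Icc_self ht
    obtain ⟨s₀, hs₀, hs₀neg⟩ := hneg t htIcc
    have hE := hu.nine_mul_graphEnergy_sq_le (by linarith) hn2 hε.le htIcc hs₀ hs₀neg
      (hbound t htIcc)
    rw [neg_le_neg_iff, div_mul_eq_mul_div]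
    exact div_le_of_le_mul₀ hC.le (graphDissipation_nonneg hε.le n u t) hE
  exact fun t ht => le_div_one_add_mul_of_hasDerivAt_le_neg_mul_sq (by positivity)
    hcont.continuousOn hderiv hriccati (fun t _ => graphEnergy_nonneg u t) ht
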